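/- Let F₁,…,F_h be integral quadratic forms in m variables, Q_y(x) = Σ_{i=1}^h y_i F_i(x) with symmetric matrix M[y] = Σ_{i=1}^h y_i M_i, and let r be the rank of M[y] over the field ℚ(y₁,…,y_h); assume r ≥ 5. Suppose there do NOT exist a rational linear form l(y), an invertible rational m×m matrix P, and a definite symmetric rational r×r matrix N₁ such that Pᵀ M[y] P = l(y) · (N₁ ⊕ 0_{(m−r)×(m−r)}) identically in y. Let Δ(y) be an r×r minor of M[y] which is not the zero polynomial. Then there exists a nonempty open set U ⊆ ℝ^h such that for every y ∈ U one has Δ(y) ≠ 0, and the real quadratic form Q_y is indefinite, i.e. there exist u, v ∈ ℝ^m with Q_y(u) > 0 > Q_y(v). -/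

import Mathlib

open Matrix MvPolynomial

/-!
If some real form `Q_y` is indefinite, then so are all nearby ones, and a nonzero minor cannot
vanish on a whole open set. Otherwise every `Q_y` is semidefinite. A semidefinite matrix of trace
zero is zero, so on the rational span `V` of the `M_i` the trace is injective: `V` is spanned by one
positive semidefinite matrix `N` with `A = tr(A) N` for `A ∈ V`, and `M[y] = l(y) N` with
`l(y) = ∑ tr(M_i) y_i`. The rank of `N` is the generic rank `r`, and splitting off its kernel makes
`N` congruent over `ℚ` to `N₁ ⊕ 0` with `N₁` invertible and semidefinite, hence definite.
-/

open scoped Topology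

section Rank

variable {K L m n κ l : Type*} [Field K] [Field L] [Fintype n]

theorem rank_fromBlocks_zero {R : Type*} [CommSemiring R] [StrongRankCondition R]
    [Finite m] [Fintype l] (A : Matrix m n R) :
    (fromBlocks A 0 0 (0 : Matrix κ l R)).rank = A.rank := by
  classical
  cases nonempty_fintype m
  apply le_antisymm
  · have factor : fromBlocks A 0 0 (0 : Matrix κ l R) =
        fromRows (1 : Matrix m m R) 0 * (A * fromCols (1 : Matrix n n R) 0) := by
      simp [mul_fromCols, fromRows_mul, ← fromCols_fromRows_eq_fromBlocks]
    rw [factor]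
    exact (rank_mul_le_right _ _).trans (rank_mul_le_left _ _)
  · exact rank_submatrix_le (fromBlocks A 0 0 0) Sum.inl Sum.inl

theorem rank_map_ringHom (f : K →+* L) (N : Matrix n n K) : (N.map f).rank = N.rank := by
  classical
  obtain ⟨V, U, e, hV, hU, hVNU⟩ := exists_rank_normal_form N
  have normal_form : V.map f * N.map f * U.map f = (fromBlocks 1 0 0 0).submatrix e e := by
    rw [← Matrix.map_mul, ← Matrix.map_mul, hVNU, ← submatrix_map, fromBlocks_map]
    simp
  have hV' : IsUnit (V.map f).det := (isUnit_iff_isUnit_det _).1 (hV.map f.mapMatrix)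
  have hU' : IsUnit (U.map f).det := (isUnit_iff_isUnit_det _).1 (hU.map f.mapMatrix)
  rw [← rank_mul_eq_right_of_isUnit_det _ _ hV', ← rank_mul_eq_left_of_isUnit_det _ _ hU',
    normal_form, rank_submatrix, rank_fromBlocks_zero, rank_one, Fintype.card_fin]

theorem isUnit_of_rank_eq_card [DecidableEq n] {A : Matrix n n K}
    (hA : A.rank = Fintype.card n) : IsUnit A := by
  rw [← linearIndependent_cols_iff_isUnit, linearIndependent_iff_card_eq_finrank_span, ← hA]
  exact A.rank_eq_finrank_span_cols

theorem exists_rank_normal_form_of_equiv [Fintype m] [DecidableEq m] [DecidableEq n]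
    (e : n ≃ m ⊕ κ) {N : Matrix n n K} (hN : N.rank = Fintype.card m) :
    ∃ V U : Matrix n n K, IsUnit V ∧ IsUnit U ∧
      V * N * U = (fromBlocks 1 0 0 0).submatrix e e := by
  have : Fintype κ := .ofInjective (e.symm ∘ Sum.inr) (e.symm.injective.comp Sum.inr_injective)
  obtain ⟨V, U, s, hV, hU, hVNU⟩ := exists_rank_normal_form N
  have hκ : Fintype.card n - N.rank = Fintype.card κ := by
    rw [hN, Fintype.card_congr e, Fintype.card_sum, Nat.add_sub_cancel_left]
  let a : Fin N.rank ≃ m := Fintype.equivOfCardEq (by rw [Fintype.card_fin, hN])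
  let b : Fin (Fintype.card n - N.rank) ≃ κ := Fintype.equivOfCardEq (by rw [Fintype.card_fin, hκ])
  let τ : n ≃ n := e.trans ((a.sumCongr b).symm.trans s.symm)
  refine ⟨V.submatrix τ (Equiv.refl n), U.submatrix (Equiv.refl n) τ,
    (isUnit_submatrix_equiv _ _).2 hV, (isUnit_submatrix_equiv _ _).2 hU, ?_⟩
  calc V.submatrix τ (Equiv.refl n) * N * U.submatrix (Equiv.refl n) τ
      = (V * N * U).submatrix τ τ := rfl
    _ = (fromBlocks 1 0 0 0).submatrix e e := by
      rw [hVNU]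
      ext x y
      rcases hx : e x with i | i <;> rcases hy : e y with j | j <;>
        simp [τ, hx, hy, one_apply]

theorem isSymm_transpose_mul_mul {R : Type*} [CommSemiring R] {N : Matrix n n R}
    (hN : N.IsSymm) (P : Matrix n m R) :
    (Pᵀ * N * P).IsSymm := by
  rw [IsSymm, transpose_mul, transpose_mul, transpose_transpose, hN.eq, Matrix.mul_assoc]

theorem exists_transpose_mul_mul_eq_fromBlocks [Fintype m] [DecidableEq n]
    (e : n ≃ m ⊕ κ) {N : Matrix n n K} (hsymm : N.IsSymm) (hrank : N.rank = Fintype.card m) :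
    ∃ (P : Matrix n n K) (N₁ : Matrix m m K), IsUnit P.det ∧
      Pᵀ * N * P = (fromBlocks N₁ 0 0 0).submatrix e e := by
  classical
  have : Fintype κ := .ofInjective (e.symm ∘ Sum.inr) (e.symm.injective.comp Sum.inr_injective)
  obtain ⟨V, U, hV, hU, hVNU⟩ := exists_rank_normal_form_of_equiv e hrank
  have hVdet := (isUnit_iff_isUnit_det _).1 hV
  set T := (Uᵀ * N * U).submatrix e.symm e.symm with hT
  have hTsymm : T.IsSymm := (isSymm_transpose_mul_mul hsymm U).submatrix _
  have T_eq : T = (Uᵀ * V⁻¹).submatrix e.symm e.symm * fromBlocks 1 0 0 0 := by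
    have hUNU : Uᵀ * N * U = Uᵀ * V⁻¹ * (fromBlocks 1 0 0 0).submatrix e e := by
      rw [← hVNU, Matrix.mul_assoc V, Matrix.mul_assoc Uᵀ V⁻¹,
        nonsing_inv_mul_cancel_left _ _ hVdet, Matrix.mul_assoc]
    rw [hT, hUNU, ← submatrix_mul_equiv _ _ _ e.symm, submatrix_submatrix, e.self_comp_symm,
      submatrix_id_id]
  have right_zero (a : m ⊕ κ) (j : κ) : T a (Sum.inr j) = 0 := by
    simp [T_eq, mul_apply]
  have left_zero (a : m ⊕ κ) (j : κ) : T (Sum.inr j) a = 0 := by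
    rw [← hTsymm.apply, right_zero]
  refine ⟨U, T.toBlocks₁₁, (isUnit_iff_isUnit_det _).1 hU, ?_⟩
  have blocks : fromBlocks T.toBlocks₁₁ 0 0 0 = T := by
    ext (i | i) (j | j) <;> simp [toBlocks₁₁, right_zero, left_zero]
  rw [blocks, hT]
  simp

end Rank

section Semidefinite

variable {K m n κ : Type*} [Field K] [Algebra K ℝ] [Fintype n]

theorem exists_congr_fromBlocks_posDef [Fintype m] [DecidableEq n]
    (e : n ≃ m ⊕ κ) {N : Matrix n n K} (hsymm : N.IsSymm) (hrank : N.rank = Fintype.card m)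
    (hpos : (N.map (algebraMap K ℝ)).PosSemidef) :
    ∃ (P : Matrix n n K) (N₁ : Matrix m m K), IsUnit P.det ∧ N₁.IsSymm ∧
      (N₁.map (algebraMap K ℝ)).PosDef ∧
      Pᵀ * N * P = (fromBlocks N₁ 0 0 0).submatrix e e := by
  classical
  have : Fintype κ := .ofInjective (e.symm ∘ Sum.inr) (e.symm.injective.comp Sum.inr_injective)
  obtain ⟨P, N₁, hP, hPNP⟩ := exists_transpose_mul_mul_eq_fromBlocks e hsymm hrank
  have N₁_eq : N₁ = (Pᵀ * N * P).submatrix (e.symm ∘ Sum.inl) (e.symm ∘ Sum.inl) := by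
    ext i j
    simp [hPNP]
  have hN₁rank : N₁.rank = Fintype.card m := by
    rw [← hrank, ← rank_mul_eq_right_of_isUnit_det Pᵀ N (isUnit_det_transpose P hP),
      ← rank_mul_eq_left_of_isUnit_det P _ hP, hPNP, rank_submatrix, rank_fromBlocks_zero]
  have hN₁pos : (N₁.map (algebraMap K ℝ)).PosSemidef := by
    have := (hpos.conjTranspose_mul_mul_same (P.map (algebraMap K ℝ))).submatrix (e.symm ∘ Sum.inl)
    rw [N₁_eq, ← submatrix_map, Matrix.map_mul, Matrix.map_mul, transpose_map]
    simpa [conjTranspose_eq_transpose_of_trivial] using this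
  refine ⟨P, N₁, hP, ?_, ?_, hPNP⟩
  · rw [N₁_eq]
    exact (isSymm_transpose_mul_mul hsymm P).submatrix _
  · exact hN₁pos.posDef_iff_isUnit.2 ((isUnit_of_rank_eq_card hN₁rank).map
      (algebraMap K ℝ).mapMatrix)

theorem eq_zero_of_semidefinite_of_trace_eq_zero {A : Matrix n n ℝ}
    (hA : A.PosSemidef ∨ (-A).PosSemidef) (htr : A.trace = 0) : A = 0 := by
  classical
  rcases hA with hpos | hneg
  · exact hpos.trace_eq_zero_iff.1 htr
  · exact neg_eq_zero.1 (hneg.trace_eq_zero_iff.1 (by rw [trace_neg, htr, neg_zero]))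

theorem exists_posSemidef_eq_trace_smul (V : Submodule K (Matrix n n K))
    (hV : ∀ A ∈ V, (A.map (algebraMap K ℝ)).PosSemidef ∨ (-A.map (algebraMap K ℝ)).PosSemidef) :
    ∃ N ∈ V, (N.map (algebraMap K ℝ)).PosSemidef ∧ ∀ A ∈ V, A = A.trace • N := by
  classical
  have trace_map (A : Matrix n n K) :
      (A.map (algebraMap K ℝ)).trace = algebraMap K ℝ A.trace :=
    (AddMonoidHom.map_trace (algebraMap K ℝ) A).symm
  have eq_zero_of_trace {A : Matrix n n K} (hA : A ∈ V) (htr : A.trace = 0) : A = 0 := by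
    refine (map_eq_zero_iff (algebraMap K ℝ).mapMatrix
      (map_injective (algebraMap K ℝ).injective)).1 ?_
    exact eq_zero_of_semidefinite_of_trace_eq_zero (hV A hA)
      ((trace_map A).trans (by rw [htr, map_zero]))
  by_cases! h : ∃ B ∈ V, B.trace ≠ 0
  · obtain ⟨B, hB, hBtr⟩ := h
    have hN : B.trace⁻¹ • B ∈ V := V.smul_mem _ hB
    have hNtr : (B.trace⁻¹ • B).trace = 1 := by rw [trace_smul, smul_eq_mul, inv_mul_cancel₀ hBtr]
    refine ⟨B.trace⁻¹ • B, hN, ?_, fun A hA => ?_⟩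
    · refine (hV _ hN).resolve_right fun hneg => ?_
      have := hneg.trace_nonneg
      rw [trace_neg, trace_map, hNtr, map_one] at this
      linarith
    · refine sub_eq_zero.1 (eq_zero_of_trace (V.sub_mem hA (V.smul_mem _ hN)) ?_)
      rw [trace_sub, trace_smul, hNtr, smul_eq_mul, mul_one, sub_self]
  · refine ⟨0, V.zero_mem, ?_, fun A hA => ?_⟩
    · rw [Matrix.map_zero _ (map_zero _)]
      exact .zero
    · rw [smul_zero, eq_zero_of_trace hA (h A hA)]

end Semidefinite

theorem dense_setOf_eval_ne_zero {σ R : Type*} [CommRing R] [IsDomain R] [TopologicalSpace R]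
    [T1Space R] [∀ x : R, (𝓝[≠] x).NeBot] {p : MvPolynomial σ R} (hp : p ≠ 0) :
    Dense {y : σ → R | eval y p ≠ 0} := by
  refine dense_iff_inter_open.2 fun U hU ⟨y, hy⟩ => ?_
  obtain ⟨I, u, hu, hIU⟩ := isOpen_pi_iff.1 hU y hy
  have infinite (i : σ) : {t | i ∈ I → t ∈ u i}.Infinite := by
    refine infinite_of_mem_nhds (y i) ?_
    by_cases hi : i ∈ I
    · simpa [hi] using (hu i hi).1.mem_nhds (hu i hi).2
    · simp [hi]
  by_contra hempty
  refine hp (funext_set _ infinite fun x hx => ?_)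
  rw [map_zero]
  by_contra hxp
  exact hempty ⟨x, hIU fun i hi => hx i trivial hi, hxp⟩

section Indefinite

variable {n : Type*} [Fintype n]

/-- A real square matrix is indefinite if its quadratic form takes both positive and negative
values. -/
def IsIndefinite (A : Matrix n n ℝ) : Prop :=
  (∃ u : n → ℝ, 0 < u ⬝ᵥ A *ᵥ u) ∧ ∃ u : n → ℝ, u ⬝ᵥ A *ᵥ u < 0

theorem isOpen_setOf_isIndefinite : IsOpen {A : Matrix n n ℝ | IsIndefinite A} := by
  have hcont (u : n → ℝ) : Continuous fun A : Matrix n n ℝ => u ⬝ᵥ A *ᵥ u := by fun_prop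
  simp only [IsIndefinite, Set.ofPred_and, Set.ofPred_exists]
  exact (isOpen_iUnion fun u => isOpen_lt continuous_const (hcont u)).inter
    (isOpen_iUnion fun u => isOpen_lt (hcont u) continuous_const)

theorem posSemidef_or_neg_posSemidef_of_not_isIndefinite {A : Matrix n n ℝ} (hA : A.IsHermitian)
    (h : ¬IsIndefinite A) : A.PosSemidef ∨ (-A).PosSemidef := by
  rcases not_and_or.1 h with hpos | hneg
  · push Not at hpos
    exact .inr (.of_dotProduct_mulVec_nonneg hA.neg (by simpa [neg_mulVec] using hpos))
  · push Not at hneg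
    exact .inl (.of_dotProduct_mulVec_nonneg hA (by simpa using hneg))

end Indefinite

section Pencil

variable {ι K n : Type*} [Fintype ι] [Field K]

/-- The pencil `M[y]` at the generic point, whose coordinates are the indeterminates; its rank over
the fraction field and its minors are those of the pencil. -/
noncomputable def genericPencil (M : ι → Matrix n n K) : Matrix n n (MvPolynomial ι K) :=
  of fun a b => ∑ i, X i * C (M i a b)

theorem rank_map_genericPencil [Fintype n] {M : ι → Matrix n n K} {c : ι → K} {N : Matrix n n K}
    (hN : N ∈ Submodule.span K (Set.range M)) (hM : ∀ i, M i = c i • N) :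
    ((genericPencil M).map
      (algebraMap (MvPolynomial ι K) (FractionRing (MvPolynomial ι K)))).rank = N.rank := by
  set f := algebraMap (MvPolynomial ι K) (FractionRing (MvPolynomial ι K))
  let p : MvPolynomial ι K := ∑ i, X i * C (c i)
  have pencil_eq : (genericPencil M).map f = f p • N.map (f.comp C) := by
    ext a b
    simp [genericPencil, p, hM, Finset.sum_mul, mul_assoc]
  rw [pencil_eq]
  rcases eq_or_ne N 0 with rfl | hN0
  · rw [Matrix.map_zero _ (map_zero _), smul_zero, rank_zero, rank_zero]
  · have hp : p ≠ 0 := by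
      obtain ⟨z, hz⟩ := (Submodule.mem_span_range_iff_exists_fun K).1 hN
      have eval_smul : eval z p • N = N := by
        simpa [p, hM, Finset.sum_smul, smul_smul] using hz
      intro hp
      rw [hp, map_zero, zero_smul] at eval_smul
      exact hN0 eval_smul.symm
    have hfp : f p ≠ 0 := (map_ne_zero_iff f (IsFractionRing.injective _ _)).2 hp
    rw [rank_smul_of_mem_nonZeroDivisors _ (mem_nonZeroDivisors_of_ne_zero hfp), rank_map_ringHom]

variable [Algebra K ℝ]

/-- The matrix `M[y]` of the quadratic form `Q_y` at a real point `y`. -/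
def realPencil (M : ι → Matrix n n K) (y : ι → ℝ) : Matrix n n ℝ :=
  ∑ i, y i • (M i).map (algebraMap K ℝ)

theorem realPencil_apply (M : ι → Matrix n n K) (y : ι → ℝ) (a b : n) :
    realPencil M y a b = ∑ i, y i * algebraMap K ℝ (M i a b) := by
  simp [realPencil, Matrix.sum_apply]

theorem continuous_realPencil (M : ι → Matrix n n K) : Continuous (realPencil M) := by
  unfold realPencil
  fun_prop

theorem isHermitian_realPencil {M : ι → Matrix n n K} (hM : ∀ i, (M i).IsSymm) (y : ι → ℝ) :
    (realPencil M y).IsHermitian := by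
  ext a b
  simp [realPencil_apply, (hM _).apply a b]

theorem realPencil_algebraMap (M : ι → Matrix n n K) (y : ι → K) :
    realPencil M (fun i => algebraMap K ℝ (y i)) = (∑ i, y i • M i).map (algebraMap K ℝ) := by
  ext a b
  simp [realPencil_apply, Matrix.sum_apply]

theorem dense_setOf_det_submatrix_realPencil_ne_zero {s : Type*} [Fintype s] [DecidableEq s]
    {M : ι → Matrix n n K} {ρ σ : s → n}
    (hminor : ((genericPencil M).submatrix ρ σ).det ≠ 0) :
    Dense {y | ((realPencil M y).submatrix ρ σ).det ≠ 0} := by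
  set Δ := ((genericPencil M).submatrix ρ σ).det with hΔ
  have eval_Δ (y : ι → ℝ) :
      eval y (map (algebraMap K ℝ) Δ) = ((realPencil M y).submatrix ρ σ).det := by
    rw [eval_map, ← coe_eval₂Hom, hΔ, RingHom.map_det]
    congr 1
    ext a b
    simp [genericPencil, realPencil_apply]
  simp only [← eval_Δ]
  exact dense_setOf_eval_ne_zero
    ((map_ne_zero_iff _ (map_injective _ (algebraMap K ℝ).injective)).2 hminor)

variable {m κ : Type*} [Fintype n] [DecidableEq n]

/-- The pencil `M[y]` is congruent over `K` to `l(y) · (N₁ ⊕ 0)` for a linear form `l` and a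
definite matrix `N₁`. The equivalence `e` selects the rows and columns that `N₁` occupies. -/
def HasDefiniteNormalForm (e : n ≃ m ⊕ κ) (M : ι → Matrix n n K) : Prop :=
  ∃ (l : ι → K) (P : Matrix n n K) (N₁ : Matrix m m K),
    IsUnit P.det ∧ N₁.IsSymm ∧
    ((N₁.map (algebraMap K ℝ)).PosDef ∨ ((-N₁).map (algebraMap K ℝ)).PosDef) ∧
    ∀ y : ι → K, Pᵀ * (∑ i, y i • M i) * P =
      (∑ i, l i * y i) • ((fromBlocks N₁ 0 0 0).submatrix e e)

theorem hasDefiniteNormalForm_of_forall_not_isIndefinite [Fintype m]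
    (e : n ≃ m ⊕ κ) {M : ι → Matrix n n K} (hsym : ∀ i, (M i).IsSymm)
    (hrank : ((genericPencil M).map
      (algebraMap (MvPolynomial ι K) (FractionRing (MvPolynomial ι K)))).rank = Fintype.card m)
    (h : ∀ y, ¬IsIndefinite (realPencil M y)) : HasDefiniteNormalForm e M := by
  have hsemi (A : Matrix n n K) (hA : A ∈ Submodule.span K (Set.range M)) :
      (A.map (algebraMap K ℝ)).PosSemidef ∨ (-A.map (algebraMap K ℝ)).PosSemidef := by
    obtain ⟨z, rfl⟩ := (Submodule.mem_span_range_iff_exists_fun K).1 hA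
    rw [← realPencil_algebraMap]
    exact posSemidef_or_neg_posSemidef_of_not_isIndefinite (isHermitian_realPencil hsym _) (h _)
  obtain ⟨N, hN, hNpos, htrace⟩ := exists_posSemidef_eq_trace_smul _ hsemi
  have hM (i : ι) : M i = (M i).trace • N := htrace _ (Submodule.subset_span ⟨i, rfl⟩)
  have hNsymm : N.IsSymm := map_injective (algebraMap K ℝ).injective hNpos.isHermitian
  have hNrank : N.rank = Fintype.card m := (rank_map_genericPencil hN hM).symm.trans hrank
  obtain ⟨P, N₁, hP, hN₁symm, hN₁pos, hPNP⟩ :=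
    exists_congr_fromBlocks_posDef e hNsymm hNrank hNpos
  refine ⟨fun i => (M i).trace, P, N₁, hP, hN₁symm, .inl hN₁pos, fun y => ?_⟩
  have hsum : ∑ i, y i • M i = (∑ i, (M i).trace * y i) • N := by
    rw [Finset.sum_smul]
    refine Finset.sum_congr rfl fun i _ => ?_
    rw [mul_comm, mul_smul, ← hM]
  rw [hsum, Matrix.mul_smul, Matrix.smul_mul, hPNP]

theorem stmt5_general {s : Type*} [Fintype m] [Fintype s] [DecidableEq s]
    (e : n ≃ m ⊕ κ) (M : ι → Matrix n n K) (hsym : ∀ i, (M i).IsSymm)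
    (hrank : ((genericPencil M).map
      (algebraMap (MvPolynomial ι K) (FractionRing (MvPolynomial ι K)))).rank = Fintype.card m)
    (hnot : ¬HasDefiniteNormalForm e M) (ρ σ : s → n)
    (hminor : (((genericPencil M).map
      (algebraMap (MvPolynomial ι K) (FractionRing (MvPolynomial ι K)))).submatrix ρ σ).det ≠ 0) :
    ∃ U : Set (ι → ℝ), IsOpen U ∧ U.Nonempty ∧ ∀ y ∈ U,
      ((realPencil M y).submatrix ρ σ).det ≠ 0 ∧ IsIndefinite (realPencil M y) := by
  obtain ⟨y₀, hy₀⟩ : ∃ y, IsIndefinite (realPencil M y) := by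
    by_contra! h
    exact hnot (hasDefiniteNormalForm_of_forall_not_isIndefinite e hsym hrank h)
  have hcont := continuous_realPencil M
  have hindef : IsOpen {y | IsIndefinite (realPencil M y)} :=
    isOpen_setOf_isIndefinite.preimage hcont
  have hdet : IsOpen {y | ((realPencil M y).submatrix ρ σ).det ≠ 0} :=
    isOpen_ne_fun (by fun_prop) continuous_const
  have hΔ : ((genericPencil M).submatrix ρ σ).det ≠ 0 := by
    rw [submatrix_map, ← RingHom.mapMatrix_apply, ← RingHom.map_det] at hminor
    exact ne_zero_of_map hminor
  obtain ⟨y, hy, hyΔ⟩ := (dense_setOf_det_submatrix_realPencil_ne_zero hΔ).inter_open_nonempty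
    _ hindef ⟨y₀, hy₀⟩
  exact ⟨_, hdet.inter hindef, ⟨y, hyΔ, hy⟩, fun _ hw => hw⟩

end Pencil

/-- If the pencil `M[y]` of symmetric matrices of integral quadratic forms
has generic rank `r ≥ 5` and cannot be put (by an invertible change of `x`-variables) in the
shape `l(y)·(N₁ ⊕ 0)` with `N₁` definite of order `r`, then there is a nonempty open set
`U ⊆ ℝ^h` on which a chosen (generically nonzero) `r × r` minor is nonvanishing and the real
quadratic form `Q_y` is indefinite. (Here `m = r + k`.) -/
theorem stmt5 (h r k : ℕ) (hr5 : 5 ≤ r)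
    (M : Fin h → Matrix (Fin (r + k)) (Fin (r + k)) ℚ)
    (hsym : ∀ i, (M i).IsSymm)
    (hintoff : ∀ i a b, ∃ z : ℤ, (z : ℚ) = 2 * M i a b)
    (hintdiag : ∀ i a, ∃ z : ℤ, (z : ℚ) = M i a a)
    (hgenrank : Matrix.rank
      (Matrix.of fun a b =>
        algebraMap (MvPolynomial (Fin h) ℚ) (FractionRing (MvPolynomial (Fin h) ℚ))
          (∑ i, X i * C (M i a b)) :
        Matrix (Fin (r + k)) (Fin (r + k)) (FractionRing (MvPolynomial (Fin h) ℚ))) = r)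
    (hnohyp1 : ¬ ∃ (l : Fin h → ℚ) (P : Matrix (Fin (r + k)) (Fin (r + k)) ℚ)
        (N₁ : Matrix (Fin r) (Fin r) ℚ),
        IsUnit P.det ∧ N₁.IsSymm ∧
        ((N₁.map ((↑) : ℚ → ℝ)).PosDef ∨ ((-N₁).map ((↑) : ℚ → ℝ)).PosDef) ∧
        ∀ y : Fin h → ℚ, Pᵀ * (∑ i, y i • M i) * P =
          (∑ i, l i * y i) •
            ((Matrix.fromBlocks N₁ 0 0 0).submatrix finSumFinEquiv.symm finSumFinEquiv.symm))
    (ρ σ : Fin r → Fin (r + k)) (hρ : Function.Injective ρ) (hσ : Function.Injective σ)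
    (hminor : ((Matrix.of fun a b =>
        algebraMap (MvPolynomial (Fin h) ℚ) (FractionRing (MvPolynomial (Fin h) ℚ))
          (∑ i, X i * C (M i a b)) :
        Matrix (Fin (r + k)) (Fin (r + k)) (FractionRing (MvPolynomial (Fin h) ℚ))).submatrix
          ρ σ).det ≠ 0) :
    ∃ U : Set (Fin h → ℝ), IsOpen U ∧ U.Nonempty ∧ ∀ y ∈ U,
      ((∑ i, y i • (M i).map ((↑) : ℚ → ℝ)).submatrix ρ σ).det ≠ 0 ∧
      (∃ u : Fin (r + k) → ℝ, 0 < u ⬝ᵥ (∑ i, y i • (M i).map ((↑) : ℚ → ℝ)).mulVec u) ∧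
      (∃ u : Fin (r + k) → ℝ, u ⬝ᵥ (∑ i, y i • (M i).map ((↑) : ℚ → ℝ)).mulVec u < 0) :=
  stmt5_general finSumFinEquiv.symm M hsym (hgenrank.trans (Fintype.card_fin r).symm) hnohyp1
    ρ σ hminor
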